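/- arXiv:2602.22874 — 2 statements merged into one kernel-verified Lean document; each statement's English description precedes it below -/
import Mathlib

section
/- Let T and T' be triangulations of the same convex n-gon given in a linear representation, with triangle-pair set Γ and conflict graph H = H(T,T'), and let (Δ_i,Δ'_i) and (Δ_j,Δ'_j) be distinct pairs in Γ with spine edges e_i and e_j. If both pairs are of the same type (both above, both below, or both crossing) and H contains the directed edge (Δ_i,Δ'_i) → (Δ_j,Δ'_j), then e_i lies to the left of e_j on the spine, i.e., the right endpoint of e_i is at most the left endpoint of e_j. -/
/-!
The contrapositive is proved: if the spine edge `{b, b+1}` of `q` is not strictly to the right of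
the spine edge `{a, a+1}` of `p`, then the two fans do not cross.

* If `a = b`, the fan edges run from the same midpoint `a + 1/2`, so they do not interleave.
* If `b < a` and both pairs are above, a crossing forces the apexes to satisfy
  `u_q < u'_q < u_p < b + 1 < a + 1`, so the edges `{u_q, b+1}` and `{u_p, a+1}` of `T` cross.
* If `b < a` and both pairs are below, a crossing forces `b < a < u'_q < u_p < u'_p`, so the edges
  `{b, u'_q}` and `{a, u'_p}` of `T'` cross.
* If `b < a` and both pairs are crossing, the fan edge of `q` spans `(u'_q, b + 1/2)` and that of
  `p` spans `(a + 1/2, u_p)`; these intervals are disjoint.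

Both contradictions come from `IsTriangulation.not_interleave`. The passage from `crossQ`, which
concerns midpoints in `ℚ`, to inequalities between vertices is `crossQ_apex_midpoint`.
-/

/-!
Triangulations of a convex polygon whose vertices are labelled `0, 1, …, n-1`
in order along the boundary (this labelling is the *linear representation*:
the vertices lie on the spine in this order, and the spine edges are the
boundary edges `{i, i+1}` for `0 ≤ i ≤ n-2`).
-/

/-- Two chords of a convex polygon cross: their endpoints interleave along the
boundary order. -/
def Crosses (e f : Finset ℕ) : Prop :=
  ∃ a b c d : ℕ, a < b ∧ c < d ∧ e = {a, b} ∧ f = {c, d} ∧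
    ((a < c ∧ c < b ∧ b < d) ∨ (c < a ∧ a < d ∧ d < b))

/-- Boundary edges of the convex polygon with vertices `0, 1, …, n-1`. -/
def BoundaryEdge (n : ℕ) (e : Finset ℕ) : Prop :=
  (∃ i : ℕ, i + 2 ≤ n ∧ e = {i, i + 1}) ∨ (2 ≤ n ∧ e = ({0, n - 1} : Finset ℕ))

/-- A chord of the convex `n`-gon: a 2-element subset of the vertex set. -/
def IsChord (n : ℕ) (e : Finset ℕ) : Prop :=
  e.card = 2 ∧ ∀ v ∈ e, v < n

/-- A triangulation of the convex `n`-gon: all boundary edges together with an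
inclusion-maximal family of pairwise non-crossing diagonals. -/
def IsTriangulation (n : ℕ) (T : Set (Finset ℕ)) : Prop :=
  (∀ e ∈ T, IsChord n e) ∧
  (∀ e : Finset ℕ, BoundaryEdge n e → e ∈ T) ∧
  (∀ e ∈ T, ∀ f ∈ T, ¬ Crosses e f) ∧
  (∀ e : Finset ℕ, IsChord n e → e ∉ T → ∃ f ∈ T, Crosses e f)

/-- `T'` is obtained from the triangulation `T` of the convex `n`-gon by a single
flip: one diagonal `e` of `T` is replaced by another diagonal `f` so that the
result is again a triangulation. -/
def Flip (n : ℕ) (T T' : Set (Finset ℕ)) : Prop :=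
  IsTriangulation n T ∧ IsTriangulation n T' ∧
  ∃ e f : Finset ℕ, e ∈ T ∧ f ∉ T ∧ T' = insert f (T \ {e})

/-- A flip sequence of length `ℓ` from `T` to `T'` in the convex `n`-gon. -/
def IsFlipSeq (n : ℕ) (T T' : Set (Finset ℕ)) (ℓ : ℕ) (g : ℕ → Set (Finset ℕ)) : Prop :=
  g 0 = T ∧ g ℓ = T' ∧ ∀ i, i < ℓ → Flip n (g i) (g (i + 1))

/-- The flip distance between two triangulations of the convex `n`-gon:
the minimal length of a flip sequence between them. -/
noncomputable def flipDist (n : ℕ) (T T' : Set (Finset ℕ)) : ℕ :=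
  sInf {ℓ : ℕ | ∃ g : ℕ → Set (Finset ℕ), IsFlipSeq n T T' ℓ g}

/-- `{x, y, z}` is a triangle of the triangulation `T` (its three chords belong to
`T`; for triangulations of a convex polygon this means it is a face). -/
def IsTriangle (T : Set (Finset ℕ)) (x y z : ℕ) : Prop :=
  x ≠ y ∧ y ≠ z ∧ x ≠ z ∧
  ({x, y} : Finset ℕ) ∈ T ∧ ({y, z} : Finset ℕ) ∈ T ∧ ({x, z} : Finset ℕ) ∈ T

/-- `p = (a, u, u')` encodes a triangle pair of `(T, T')`: the triangle
`{a, a+1, u}` of `T` and the triangle `{a, a+1, u'}` of `T'` share the spine edge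
`{a, a+1}`, and each of the two triangles has exactly one edge on the spine
(the apex is not consecutive with the spine edge). -/
def IsTrianglePair (n : ℕ) (T T' : Set (Finset ℕ)) (p : ℕ × ℕ × ℕ) : Prop :=
  p.1 + 2 ≤ n ∧ p.2.1 < n ∧ p.2.2 < n ∧
  IsTriangle T p.1 (p.1 + 1) p.2.1 ∧ IsTriangle T' p.1 (p.1 + 1) p.2.2 ∧
  p.2.1 + 1 ≠ p.1 ∧ p.2.1 ≠ p.1 + 2 ∧ p.2.2 + 1 ≠ p.1 ∧ p.2.2 ≠ p.1 + 2

/-- The set `Γ` of triangle pairs of `(T, T')`. -/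
def Gamma (n : ℕ) (T T' : Set (Finset ℕ)) : Set (ℕ × ℕ × ℕ) :=
  {p | IsTrianglePair n T T' p}

/-- The left endpoints of the spine edges that carry a triangle pair. -/
def leftSet (n : ℕ) (T T' : Set (Finset ℕ)) : Set ℕ :=
  {a : ℕ | ∃ u u' : ℕ, (a, u, u') ∈ Gamma n T T'}

/-- The embedding of the original vertices into the vertex set of the β-blow-up:
`β` new subdivision vertices are inserted inside each spine edge carrying a
triangle pair. -/
noncomputable def emb (n : ℕ) (T T' : Set (Finset ℕ)) (β : ℕ) (i : ℕ) : ℕ :=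
  i + β * ({a ∈ leftSet n T T' | a < i}).ncard

/-- Number of vertices of the blown-up polygon. -/
noncomputable def blowSize (n : ℕ) (T T' : Set (Finset ℕ)) (β : ℕ) : ℕ :=
  n + β * (Gamma n T T').ncard

/-- The set `V(Δ)` of the `β` new subdivision vertices of the spine edge of the
pair `p`, in the β-blow-up. -/
noncomputable def subVerts (n : ℕ) (T T' : Set (Finset ℕ)) (β : ℕ) (p : ℕ × ℕ × ℕ) : Set ℕ :=
  {v : ℕ | ∃ k : ℕ, 1 ≤ k ∧ k ≤ β ∧ v = emb n T T' β p.1 + k}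

/-- The fan `Λ(Δ)` of the pair `p` in the β-blow-up of `T`: the `β` edges from
the apex of `Δ` to the subdivision vertices `V(Δ)`. -/
noncomputable def fanT (n : ℕ) (T T' : Set (Finset ℕ)) (β : ℕ) (p : ℕ × ℕ × ℕ) : Set (Finset ℕ) :=
  {E | ∃ k : ℕ, 1 ≤ k ∧ k ≤ β ∧
    E = ({emb n T T' β p.2.1, emb n T T' β p.1 + k} : Finset ℕ)}

/-- The fan `Λ(Δ')` of the pair `p` in the β-blow-up of `T'`. -/
noncomputable def fanT' (n : ℕ) (T T' : Set (Finset ℕ)) (β : ℕ) (p : ℕ × ℕ × ℕ) : Set (Finset ℕ) :=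
  {E | ∃ k : ℕ, 1 ≤ k ∧ k ≤ β ∧
    E = ({emb n T T' β p.2.2, emb n T T' β p.1 + k} : Finset ℕ)}

/-- The β-blow-up `βT` of `T`: images of the edges of `T` that are not subdivided,
the subdivided boundary pieces, and the fans `Λ(Δ)`. -/
noncomputable def blowT (n : ℕ) (T T' : Set (Finset ℕ)) (β : ℕ) : Set (Finset ℕ) :=
  {E | ∃ i j : ℕ, ({i, j} : Finset ℕ) ∈ T ∧
      (¬ ∃ a ∈ leftSet n T T', ({i, j} : Finset ℕ) = {a, a + 1}) ∧
      E = ({emb n T T' β i, emb n T T' β j} : Finset ℕ)} ∪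
  {E | ∃ a ∈ leftSet n T T', ∃ k : ℕ, k ≤ β ∧
      E = ({emb n T T' β a + k, emb n T T' β a + k + 1} : Finset ℕ)} ∪
  ⋃ p ∈ Gamma n T T', fanT n T T' β p

/-- The β-blow-up `βT'` of `T'`. -/
noncomputable def blowT' (n : ℕ) (T T' : Set (Finset ℕ)) (β : ℕ) : Set (Finset ℕ) :=
  {E | ∃ i j : ℕ, ({i, j} : Finset ℕ) ∈ T' ∧
      (¬ ∃ a ∈ leftSet n T T', ({i, j} : Finset ℕ) = {a, a + 1}) ∧
      E = ({emb n T T' β i, emb n T T' β j} : Finset ℕ)} ∪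
  {E | ∃ a ∈ leftSet n T T', ∃ k : ℕ, k ≤ β ∧
      E = ({emb n T T' β a + k, emb n T T' β a + k + 1} : Finset ℕ)} ∪
  ⋃ p ∈ Gamma n T T', fanT' n T T' β p

/-- Crossing of two chords `{a,b}` and `{c,d}` of a "polygon" with vertices on the
rational line (used to express crossing of fan edges, whose subdivision endpoints
are represented by midpoints of spine edges). -/
def crossQ (a b c d : ℚ) : Prop :=
  (min a b < min c d ∧ min c d < max a b ∧ max a b < max c d) ∨
  (min c d < min a b ∧ min a b < max c d ∧ max c d < max a b)

/-- The directed edge `p → q` of the conflict graph `H(T,T')`: the fan edges of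
`Λ(Δ_p)` (from the apex of `Δ_p` to the inside of its spine edge) cross the fan
edges of `Λ(Δ'_q)`. -/
def ConflictEdge (n : ℕ) (T T' : Set (Finset ℕ)) (p q : ℕ × ℕ × ℕ) : Prop :=
  p ∈ Gamma n T T' ∧ q ∈ Gamma n T T' ∧ p ≠ q ∧
  crossQ (p.2.1 : ℚ) ((p.1 : ℚ) + 1 / 2) (q.2.2 : ℚ) ((q.1 : ℚ) + 1 / 2)

/-- `S` contains a directed cycle of the directed graph with edge relation `E`. -/
def HasDicycleIn {α : Type*} (E : α → α → Prop) (S : Set α) : Prop :=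
  ∃ (k : ℕ) (f : ℕ → α), 0 < k ∧ (∀ i, i ≤ k → f i ∈ S) ∧
    (∀ i, i < k → E (f i) (f (i + 1))) ∧ f k = f 0

/-- `ac(H)`: the maximum cardinality of a subset of `Γ` inducing no directed cycle
in the conflict graph `H(T,T')`. -/
noncomputable def acNum (n : ℕ) (T T' : Set (Finset ℕ)) : ℕ :=
  sSup {m : ℕ | ∃ S : Set (ℕ × ℕ × ℕ), S ⊆ Gamma n T T' ∧
    ¬ HasDicycleIn (ConflictEdge n T T') S ∧ S.ncard = m}

/-- `gone(Δ)` for the flip sequence `g`: the least index `t` such that `g t`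
contains no edge of the fan `Λ(Δ)`. -/
noncomputable def gone (n : ℕ) (T T' : Set (Finset ℕ)) (β : ℕ)
    (g : ℕ → Set (Finset ℕ)) (p : ℕ × ℕ × ℕ) : ℕ :=
  sInf {t : ℕ | ∀ E ∈ fanT n T T' β p, E ∉ g t}

/-- The pair `p` is *direct* with respect to the flip sequence `g`: some
triangulation `g a` with `a ≤ gone(Δ)` contains an edge of `Λ(Δ')`. -/
def DirectPair (n : ℕ) (T T' : Set (Finset ℕ)) (β : ℕ)
    (g : ℕ → Set (Finset ℕ)) (p : ℕ × ℕ × ℕ) : Prop :=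
  ∃ a : ℕ, a ≤ gone n T T' β g p ∧ ∃ E ∈ fanT' n T T' β p, E ∈ g a

/-- Reachability in the graph with vertex set `V` and edge set `Ed`. -/
def GReach (V : Set ℕ) (Ed : Set (Finset ℕ)) : ℕ → ℕ → Prop :=
  Relation.ReflTransGen (fun u v => u ∈ V ∧ v ∈ V ∧ ({u, v} : Finset ℕ) ∈ Ed)

/-- An *above* pair: both apexes lie to the left of the spine edge,
`u < u' < a < a+1`. -/
def AbovePair (p : ℕ × ℕ × ℕ) : Prop := p.2.1 < p.2.2 ∧ p.2.2 < p.1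

/-- A *below* pair: both apexes lie to the right of the spine edge,
`a < a+1 < u < u'`. -/
def BelowPair (p : ℕ × ℕ × ℕ) : Prop := p.1 + 1 < p.2.1 ∧ p.2.1 < p.2.2

/-- A *crossing* pair: `u' < a < a+1 < u`. -/
def CrossingPair (p : ℕ × ℕ × ℕ) : Prop := p.2.2 < p.1 ∧ p.1 + 1 < p.2.1

/-- Edges of a triangulation do not interleave. -/
theorem IsTriangulation.not_interleave {n : ℕ} {T : Set (Finset ℕ)} (hT : IsTriangulation n T)
    {a b c d : ℕ} (hac : a < c) (hcb : c < b) (hbd : b < d)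
    (h₁ : ({a, b} : Finset ℕ) ∈ T) (h₂ : ({c, d} : Finset ℕ) ∈ T) : False :=
  hT.2.2.1 _ h₁ _ h₂
    ⟨a, b, c, d, hac.trans hcb, hcb.trans hbd, rfl, rfl, Or.inl ⟨hac, hcb, hbd⟩⟩

/-- Clearing denominators in `crossQ`: chords from `u` to the midpoint of `{a, a+1}` and from `v`
to the midpoint of `{b, b+1}` interleave in `ℚ` iff they do so after scaling by `2`. -/
theorem crossQ_apex_midpoint (u a v b : ℕ) :
    crossQ (u : ℚ) ((a : ℚ) + 1 / 2) (v : ℚ) ((b : ℚ) + 1 / 2) ↔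
      (min (2 * u) (2 * a + 1) < min (2 * v) (2 * b + 1) ∧
        min (2 * v) (2 * b + 1) < max (2 * u) (2 * a + 1) ∧
        max (2 * u) (2 * a + 1) < max (2 * v) (2 * b + 1)) ∨
      (min (2 * v) (2 * b + 1) < min (2 * u) (2 * a + 1) ∧
        min (2 * u) (2 * a + 1) < max (2 * v) (2 * b + 1) ∧
        max (2 * v) (2 * b + 1) < max (2 * u) (2 * a + 1)) := by
  have h₁ (x y : ℕ) : (x : ℚ) < (y : ℚ) + 1 / 2 ↔ 2 * x < 2 * y + 1 := by
    rw [← Nat.cast_lt (α := ℚ)]; push_cast; constructor <;> intro h <;> linarith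
  have h₂ (x y : ℕ) : (y : ℚ) + 1 / 2 < (x : ℚ) ↔ 2 * y + 1 < 2 * x := by
    rw [← Nat.cast_lt (α := ℚ)]; push_cast; constructor <;> intro h <;> linarith
  have h₃ (x y : ℕ) : (x : ℚ) + 1 / 2 < (y : ℚ) + 1 / 2 ↔ 2 * x + 1 < 2 * y + 1 := by
    rw [← Nat.cast_lt (α := ℚ)]; push_cast; constructor <;> intro h <;> linarith
  have h₄ (x y : ℕ) : (x : ℚ) < (y : ℚ) ↔ 2 * x < 2 * y := by
    rw [Nat.cast_lt]; omega
  simp only [crossQ, lt_min_iff, min_lt_iff, lt_max_iff, max_lt_iff, h₁, h₂, h₃, h₄]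

/-- If two distinct triangle pairs are of the same type (both
above, both below, or both crossing) and the conflict graph has the directed edge
`p → q`, then the spine edge of `p` lies to the left of the spine edge of `q`. -/
theorem conflict_same_type_left_of
    (n : ℕ) (hn : 3 ≤ n) (T T' : Set (Finset ℕ))
    (hT : IsTriangulation n T) (hT' : IsTriangulation n T')
    (p q : ℕ × ℕ × ℕ) (hp : p ∈ Gamma n T T') (hq : q ∈ Gamma n T T') (hpq : p ≠ q)
    (hsame : (AbovePair p ∧ AbovePair q) ∨ (BelowPair p ∧ BelowPair q) ∨
      (CrossingPair p ∧ CrossingPair q))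
    (hE : ConflictEdge n T T' p q) :
    p.1 + 1 ≤ q.1 := by
  obtain ⟨a, u, u'⟩ := p
  obtain ⟨b, v, v'⟩ := q
  obtain ⟨-, -, -, ⟨-, -, -, -, hpT, -⟩, ⟨-, -, -, -, -, hpT'⟩, -⟩ := hp
  obtain ⟨-, -, -, ⟨-, -, -, -, hqT, -⟩, ⟨-, -, -, -, -, hqT'⟩, -⟩ := hq
  obtain ⟨-, -, -, hcross⟩ := hE
  simp only [crossQ_apex_midpoint] at hcross
  simp only [AbovePair, BelowPair, CrossingPair] at hsame hpT hpT' hqT hqT' ⊢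
  by_contra hlt
  rcases hsame with ⟨hp, hq⟩ | ⟨hp, hq⟩ | ⟨hp, hq⟩
  · rw [Finset.pair_comm] at hpT hqT
    exact hT.not_interleave (by omega) (by omega) (by omega) hqT hpT
  · exact hT'.not_interleave (by omega) (by omega) (by omega) hqT' hpT'
  · omega
end

section
/- For every n ≥ 1, the rotation graph of binary trees with n internal nodes is isomorphic, as a graph, to the flip graph of triangulations of a convex (n+2)-gon. -/
/-- Binary trees: every internal node has an ordered pair of children, the
remaining nodes are leaves. -/
inductive BTree : Type
  | leaf : BTree
  | node : BTree → BTree → BTree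

/-- The number of internal nodes of a binary tree. -/
def BTree.internal : BTree → ℕ
  | .leaf => 0
  | .node l r => l.internal + r.internal + 1

/-- A single rotation in a binary tree: rotating an internal non-root node `b`
with its parent `a` (in either direction), anywhere in the tree. -/
inductive Rot : BTree → BTree → Prop
  | rotUp (X Y Z : BTree) : Rot (.node (.node X Y) Z) (.node X (.node Y Z))
  | rotDown (X Y Z : BTree) : Rot (.node X (.node Y Z)) (.node (.node X Y) Z)
  | congLeft {l l' : BTree} (r : BTree) : Rot l l' → Rot (.node l r) (.node l' r)
  | congRight (l : BTree) {r r' : BTree} : Rot r r' → Rot (.node l r) (.node l r')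

/-- The intervals `[a, b]` and `[c, d]` overlap without one containing the other. -/
def Cr (a b c d : ℕ) : Prop := (a < c ∧ c < b ∧ b < d) ∨ (c < a ∧ a < d ∧ d < b)

/-- Triangulations of the polygon on the vertices `p, …, q`, as families of intervals:
`S a b` means that the chord `{a, b}`, `a < b`, belongs to the triangulation. -/
structure IsTri (p q : ℕ) (S : ℕ → ℕ → Prop) : Prop where
  range : ∀ a b, S a b → p ≤ a ∧ a < b ∧ b ≤ q
  unit : ∀ a, p ≤ a → a < q → S a (a + 1)
  top : S p q
  nc : ∀ a b c d, S a b → S c d → ¬ Cr a b c d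
  max : ∀ a b, p ≤ a → a < b → b ≤ q → ¬ S a b → ∃ c d, S c d ∧ Cr a b c d

/-- The family `S'` arises from `S` by exchanging one member for a new one. -/
def Swap (S S' : ℕ → ℕ → Prop) : Prop :=
  ∃ a b c d, S a b ∧ ¬ S c d ∧ ∀ x y, S' x y ↔ (x = c ∧ y = d) ∨ (S x y ∧ ¬ (x = a ∧ y = b))

namespace BTree

/-- The number of leaves. -/
def width (t : BTree) : ℕ := t.internal + 1

lemma width_pos (t : BTree) : 0 < t.width := Nat.succ_pos _

lemma width_leaf : BTree.leaf.width = 1 := rfl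

lemma width_node (l r : BTree) : (BTree.node l r).width = l.width + r.width := by
  simp only [width, internal]; omega

/-- `t.Arc i a b`: the interval `[a, b]` is spanned by the leaves below some node of `t`
(leaves of `t` included), where the leaves of `t` are the unit intervals following `i`. -/
def Arc : BTree → ℕ → ℕ → ℕ → Prop
  | .leaf, i, a, b => a = i ∧ b = i + 1
  | .node l r, i, a, b =>
    (a = i ∧ b = i + l.width + r.width) ∨ l.Arc i a b ∨ r.Arc (i + l.width) a b

lemma arc_leaf {i a b : ℕ} : BTree.leaf.Arc i a b ↔ a = i ∧ b = i + 1 := Iff.rfl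

lemma arc_node {l r : BTree} {i a b : ℕ} : (BTree.node l r).Arc i a b ↔
    (a = i ∧ b = i + l.width + r.width) ∨ l.Arc i a b ∨ r.Arc (i + l.width) a b := Iff.rfl

lemma arc_range (t : BTree) (i a b : ℕ) (h : t.Arc i a b) :
    i ≤ a ∧ a < b ∧ b ≤ i + t.width := by
  induction t generalizing i with
  | leaf => rw [arc_leaf] at h; rw [width_leaf]; omega
  | node l r ihl ihr =>
    have := l.width_pos
    have := r.width_pos
    rw [width_node]
    rcases arc_node.1 h with h | h | h
    · omega
    · have := ihl _ h; omega
    · have := ihr _ h; omega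

lemma arc_top (t : BTree) (i : ℕ) : t.Arc i i (i + t.width) := by
  cases t with
  | leaf => exact ⟨rfl, rfl⟩
  | node l r => exact Or.inl ⟨rfl, by rw [width_node, add_assoc]⟩

lemma isTri_arc (t : BTree) (i : ℕ) : IsTri i (i + t.width) (t.Arc i) := by
  induction t generalizing i with
  | leaf =>
    simp only [width_leaf]
    refine ⟨arc_range _ _, fun a _ _ => arc_leaf.2 (by omega), arc_top _ _, ?_,
      fun a b _ _ _ h => absurd (arc_leaf.2 (by omega)) h⟩
    intro a b c d h h'
    rw [arc_leaf] at h h'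
    unfold Cr
    omega
  | node l r ihl ihr =>
    have L := ihl i
    have R := ihr (i + l.width)
    have hl := l.width_pos
    have hr := r.width_pos
    refine ⟨arc_range _ _, ?_, arc_top _ _, ?_, ?_⟩
    · intro a h1 h2
      rw [width_node] at h2
      rcases lt_or_ge a (i + l.width) with h | h
      · exact Or.inr (Or.inl (L.unit a h1 h))
      · exact Or.inr (Or.inr (R.unit a h (by omega)))
    · intro a b c d h1 h2
      rcases arc_node.1 h1 with h1 | h1 | h1 <;> rcases arc_node.1 h2 with h2 | h2 | h2
      · unfold Cr; omega
      · have := L.range _ _ h2; unfold Cr; omega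
      · have := R.range _ _ h2; unfold Cr; omega
      · have := L.range _ _ h1; unfold Cr; omega
      · exact L.nc _ _ _ _ h1 h2
      · have := L.range _ _ h1; have := R.range _ _ h2; unfold Cr; omega
      · have := R.range _ _ h1; unfold Cr; omega
      · have := R.range _ _ h1; have := L.range _ _ h2; unfold Cr; omega
      · exact R.nc _ _ _ _ h1 h2
    · intro a b h1 h2 h3 h4
      rw [width_node] at h3
      rw [arc_node, not_or, not_or] at h4
      obtain ⟨h4, h5, h6⟩ := h4
      by_cases hb : b ≤ i + l.width
      · obtain ⟨c, d, h, h'⟩ := L.max a b h1 h2 hb h5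
        exact ⟨c, d, Or.inr (Or.inl h), h'⟩
      by_cases ha : i + l.width ≤ a
      · obtain ⟨c, d, h, h'⟩ := R.max a b ha h2 (by omega) h6
        exact ⟨c, d, Or.inr (Or.inr h), h'⟩
      by_cases hi : a = i
      · exact ⟨_, _, Or.inr (Or.inr R.top), by unfold Cr; omega⟩
      · exact ⟨_, _, Or.inr (Or.inl L.top), by unfold Cr; omega⟩

/-- The left subtree contributes exactly the intervals lying left of the split point. -/
lemma arc_node_left {l r : BTree} {i a b : ℕ} :
    l.Arc i a b ↔ (BTree.node l r).Arc i a b ∧ b ≤ i + l.width := by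
  have := r.width_pos
  constructor
  · exact fun h => ⟨Or.inr (Or.inl h), (arc_range _ _ _ _ h).2.2⟩
  · rintro ⟨h | h | h, h'⟩
    · omega
    · exact h
    · have := arc_range _ _ _ _ h; omega

/-- The right subtree contributes exactly the intervals lying right of the split point. -/
lemma arc_node_right {l r : BTree} {i a b : ℕ} :
    r.Arc (i + l.width) a b ↔ (BTree.node l r).Arc i a b ∧ i + l.width ≤ a := by
  have := l.width_pos
  constructor
  · exact fun h => ⟨Or.inr (Or.inr h), (arc_range _ _ _ _ h).1⟩
  · rintro ⟨h | h | h, h'⟩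
    · omega
    · have := arc_range _ _ _ _ h; omega
    · exact h

/-- A tree is determined by its family of intervals. Equality of the widths follows from that of
the families but is assumed for convenience. -/
lemma arc_injective (t t' : BTree) (i : ℕ) (hw : t.width = t'.width)
    (h : ∀ a b, t.Arc i a b ↔ t'.Arc i a b) : t = t' := by
  induction t generalizing t' i with
  | leaf =>
    cases t' with
    | leaf => rfl
    | node l r =>
      have := l.width_pos; have := r.width_pos; rw [width_leaf, width_node] at hw; omega
  | node l r ihl ihr =>
    cases t' with
    | leaf => have := l.width_pos; have := r.width_pos; rw [width_leaf, width_node] at hw; omega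
    | node l' r' =>
      have T := isTri_arc (.node l' r') i
      have h1 := (h _ _).1 (arc_node_left.1 (arc_top l i)).1
      have h2 := (h _ _).1 (arc_node_right.1 (arc_top r (i + l.width))).1
      have h3 := (arc_node_left (r := r').1 (arc_top l' i)).1
      have h4 := (arc_node_right (l := l').1 (arc_top r' (i + l'.width))).1
      have c1 := T.nc _ _ _ _ h1 h4
      have c2 := T.nc _ _ _ _ h3 h2
      have := l.width_pos
      have := r.width_pos
      have := l'.width_pos
      have := r'.width_pos
      rw [width_node, width_node] at hw
      unfold Cr at c1 c2
      have e : l.width = l'.width := by omega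
      have el : l = l' := ihl l' i e fun a b => by
        rw [arc_node_left (l := l) (r := r), arc_node_left (l := l') (r := r'), h, e]
      have er : r = r' := ihr r' (i + l.width) (by omega) fun a b => by
        rw [arc_node_right (l := l) (r := r), e, arc_node_right (l := l') (r := r'), h]
      rw [el, er]

end BTree

open BTree

/-- Every triangulation is the family of intervals of a tree. -/
lemma IsTri.exists_tree (w : ℕ) : ∀ (p : ℕ) (S : ℕ → ℕ → Prop), IsTri p (p + w + 1) S →
    ∃ t : BTree, t.internal = w ∧ ∀ a b, t.Arc p a b ↔ S a b := by
  classical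
  induction w using Nat.strong_induction_on with
  | _ w ih =>
  intro p S hS
  rcases Nat.eq_zero_or_pos w with rfl | hw
  · refine ⟨.leaf, rfl, fun a b => ⟨?_, fun h => ?_⟩⟩
    · rintro ⟨rfl, rfl⟩; exact hS.unit a le_rfl (by omega)
    · have := hS.range _ _ h; rw [arc_leaf]; omega
  -- `p + k + 1` is the largest vertex joined to `p`, apart from the last vertex.
  obtain ⟨k, hkw, hk, hmax⟩ : ∃ k < w, S p (p + k + 1) ∧
      ∀ d, S p d → d < p + w + 1 → d ≤ p + k + 1 := by
    refine ⟨Nat.findGreatest (fun k => S p (p + k + 1)) (w - 1), ?_, ?_, ?_⟩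
    · have := Nat.findGreatest_le (P := fun k => S p (p + k + 1)) (w - 1); omega
    · exact Nat.findGreatest_spec (P := fun k => S p (p + k + 1)) (m := 0) (Nat.zero_le _)
        (hS.unit p le_rfl (by omega))
    · intro d hd hdw
      have := hS.range _ _ hd
      have := Nat.le_findGreatest (P := fun k => S p (p + k + 1)) (m := d - p - 1) (n := w - 1)
        (by omega) (by simpa only [show p + (d - p - 1) + 1 = d by omega] using hd)
      omega
  have hmid : S (p + k + 1) (p + w + 1) := by
    by_contra hn
    obtain ⟨c, d, h, hc⟩ := hS.max _ _ (by omega) (by omega) le_rfl hn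
    have h1 := hS.range _ _ h
    have h2 := hS.nc _ _ _ _ h hk
    unfold Cr at hc h2
    rcases eq_or_ne c p with rfl | hcp
    · have := hmax d h (by omega); omega
    · omega
  have hsplit : ∀ a b, S a b → (a = p ∧ b = p + w + 1) ∨ b ≤ p + k + 1 ∨ p + k + 1 ≤ a := by
    intro a b h
    have h1 := hS.range _ _ h
    have h2 := hS.nc _ _ _ _ h hk
    unfold Cr at h2
    rcases eq_or_ne a p with rfl | hap
    · have := hmax b h; omega
    · omega
  obtain ⟨l, hl, hl'⟩ := ih k hkw p (fun a b => S a b ∧ b ≤ p + k + 1)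
    { range := fun a b h => ⟨(hS.range _ _ h.1).1, (hS.range _ _ h.1).2.1, h.2⟩
      unit := fun a h1 h2 => ⟨hS.unit a h1 (by omega), h2⟩
      top := ⟨hk, le_rfl⟩
      nc := fun a b c d h h' => hS.nc _ _ _ _ h.1 h'.1
      max := fun a b h1 h2 h3 h4 => by
        obtain ⟨c, d, h, hc⟩ := hS.max a b h1 h2 (by omega) fun h => h4 ⟨h, h3⟩
        refine ⟨c, d, ⟨h, ?_⟩, hc⟩
        have := hsplit _ _ h
        unfold Cr at hc
        omega }
  obtain ⟨r, hr, hr'⟩ := ih (w - 1 - k) (by omega) (p + k + 1) (fun a b => S a b ∧ p + k + 1 ≤ a)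
    (by
      rw [show p + k + 1 + (w - 1 - k) + 1 = p + w + 1 by omega]
      exact
      { range := fun a b h => ⟨h.2, (hS.range _ _ h.1).2⟩
        unit := fun a h1 h2 => ⟨hS.unit a (by omega) h2, h1⟩
        top := ⟨hmid, le_rfl⟩
        nc := fun a b c d h h' => hS.nc _ _ _ _ h.1 h'.1
        max := fun a b h1 h2 h3 h4 => by
          obtain ⟨c, d, h, hc⟩ := hS.max a b (by omega) h2 h3 fun h => h4 ⟨h, h1⟩
          refine ⟨c, d, ⟨h, ?_⟩, hc⟩
          have := hsplit _ _ h
          unfold Cr at hc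
          omega })
  refine ⟨.node l r, by simp only [internal]; omega, fun a b => ?_⟩
  have ewl : p + l.width = p + k + 1 := by simp only [width]; omega
  have ewr : p + k + 1 + r.width = p + w + 1 := by simp only [width]; omega
  rw [arc_node, ewl, ewr, hl', hr']
  constructor
  · rintro (⟨rfl, rfl⟩ | h | h)
    exacts [hS.top, h.1, h.1]
  · intro h
    rcases hsplit a b h with hs | hs | hs
    exacts [Or.inl hs, Or.inr (Or.inl ⟨h, hs⟩), Or.inr (Or.inr ⟨h, hs⟩)]

/-! ### Rotations and flips -/

lemma Swap.symm {S S' : ℕ → ℕ → Prop} (h : Swap S S') : Swap S' S := by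
  obtain ⟨a, b, c, d, h1, h2, h3⟩ := h
  refine ⟨c, d, a, b, (h3 _ _).2 (Or.inl ⟨rfl, rfl⟩), ?_, fun x y => ?_⟩
  · rw [h3]
    rintro (⟨rfl, rfl⟩ | h)
    exacts [h2 h1, h.2 ⟨rfl, rfl⟩]
  · rw [h3]
    constructor
    · intro h
      by_cases e : x = a ∧ y = b
      · exact Or.inl e
      · refine Or.inr ⟨Or.inr ⟨h, e⟩, ?_⟩
        rintro ⟨rfl, rfl⟩
        exact h2 h
    · rintro (⟨rfl, rfl⟩ | ⟨h | h, h'⟩)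
      exacts [h1, absurd h h', h.1]

lemma Rot.width_eq {t t' : BTree} (h : Rot t t') : t.width = t'.width := by
  induction h <;> simp only [width_node] <;> omega

lemma Rot.symm {t t' : BTree} (h : Rot t t') : Rot t' t := by
  induction h with
  | rotUp X Y Z => exact .rotDown X Y Z
  | rotDown X Y Z => exact .rotUp X Y Z
  | congLeft r _ ih => exact .congLeft r ih
  | congRight l _ ih => exact .congRight l ih

/-- The rotation at the root exchanges `[i, i + x + y]` for `[i + x, i + x + y + z]`, where
`x, y, z` are the widths of the three subtrees. -/
lemma swap_rotUp (X Y Z : BTree) (i : ℕ) :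
    Swap ((BTree.node (.node X Y) Z).Arc i) ((BTree.node X (.node Y Z)).Arc i) := by
  have := X.width_pos
  have := Y.width_pos
  have := Z.width_pos
  have rX := arc_range X i
  have rY := arc_range Y (i + X.width)
  have rZ := arc_range Z (i + X.width + Y.width)
  refine ⟨i, i + X.width + Y.width, i + X.width, i + X.width + Y.width + Z.width, ?_, ?_, ?_⟩
  · simp only [arc_node, width_node]; simp
  · simp only [arc_node, width_node, ← add_assoc]
    rintro (h | (h | h | h) | h)
    · omega
    · omega
    · have := rX _ _ h; omega
    · have := rY _ _ h; omega
    · have := rZ _ _ h; omega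
  · intro x y
    have rX := rX x y
    have rY := rY x y
    have rZ := rZ x y
    simp only [arc_node, width_node, ← add_assoc]
    by_cases hX : X.Arc i x y
    · have := rX hX; simp only [hX, true_or, or_true, true_and, true_iff]; omega
    by_cases hY : Y.Arc (i + X.width) x y
    · have := rY hY; simp only [hY, true_or, or_true, true_and, true_iff]; omega
    by_cases hZ : Z.Arc (i + X.width + Y.width) x y
    · have := rZ hZ; simp only [hZ, or_true, true_and, true_iff]; omega
    simp only [hX, hY, hZ, or_false, false_or]
    omega

lemma Rot.swap {t t' : BTree} (h : Rot t t') : ∀ i, Swap (t.Arc i) (t'.Arc i) := by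
  induction h with
  | rotUp X Y Z => exact swap_rotUp X Y Z
  | rotDown X Y Z => exact fun i => (swap_rotUp X Y Z i).symm
  | @congLeft l l' r hl ih =>
    intro i
    have := hl.width_eq
    have := r.width_pos
    obtain ⟨a, b, c, d, h1, h2, h3⟩ := ih i
    have q1 := arc_range _ _ _ _ h1
    have q2 := arc_range _ _ _ _ ((h3 c d).2 (Or.inl ⟨rfl, rfl⟩))
    refine ⟨a, b, c, d, Or.inr (Or.inl h1), ?_, fun x y => ?_⟩
    · rintro (h | h | h)
      · omega
      · exact h2 h
      · have := arc_range _ _ _ _ h; omega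
    · rw [arc_node, arc_node, ← hl.width_eq, h3]
      have := arc_range r (i + l.width) x y
      by_cases hr : r.Arc (i + l.width) x y
      · have := this hr; simp only [hr, or_true, true_and, true_iff]; omega
      · simp only [hr, or_false]
        by_cases e : x = i ∧ y = i + l.width + r.width
        · simp only [e, true_and, and_self, true_or, true_iff]; omega
        · simp only [e, false_or]
  | @congRight l r r' hr ih =>
    intro i
    have := hr.width_eq
    have := l.width_pos
    obtain ⟨a, b, c, d, h1, h2, h3⟩ := ih (i + l.width)
    have q1 := arc_range _ _ _ _ h1
    have q2 := arc_range _ _ _ _ ((h3 c d).2 (Or.inl ⟨rfl, rfl⟩))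
    refine ⟨a, b, c, d, Or.inr (Or.inr h1), ?_, fun x y => ?_⟩
    · rintro (h | h | h)
      · omega
      · have := arc_range _ _ _ _ h; omega
      · exact h2 h
    · rw [arc_node, arc_node, ← hr.width_eq, h3]
      have := arc_range l i x y
      by_cases hl : l.Arc i x y
      · have := this hl; simp only [hl, or_true, true_or, true_and, true_iff]; omega
      · simp only [hl, false_or]
        by_cases e : x = i ∧ y = i + l.width + r.width
        · simp only [e, true_and, and_self, true_or, true_iff]; omega
        · simp only [e, false_or]

/-- Triangulations of the same polygon that are comparable under inclusion are equal. -/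
lemma IsTri.eq_of_le {p q : ℕ} {S S' : ℕ → ℕ → Prop} (h : IsTri p q S) (h' : IsTri p q S')
    (hle : ∀ a b, S a b → S' a b) (a b : ℕ) : S a b ↔ S' a b := by
  refine ⟨hle a b, fun hs => ?_⟩
  by_contra hn
  have hr := h'.range _ _ hs
  obtain ⟨c, d, hcd, hc⟩ := h.max a b hr.1 hr.2.1 hr.2.2 hn
  exact h'.nc _ _ _ _ hs (hle _ _ hcd) hc

/-- If a flip moves the split point of the root to the right, it is a rotation at the root: it
replaces the right child interval of the first tree by the left child interval of the second. -/
lemma rot_of_swap_of_lt {l r l' r' : BTree} {i : ℕ}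
    (hw : (BTree.node l r).width = (BTree.node l' r').width) (hlt : l.width < l'.width)
    (h : Swap ((BTree.node l r).Arc i) ((BTree.node l' r').Arc i)) :
    Rot (.node l r) (.node l' r') := by
  have T := isTri_arc (.node l r) i
  have T' := isTri_arc (.node l' r') i
  obtain ⟨a, b, c, d, h1, h2, h3⟩ := h
  have := l.width_pos
  have := r.width_pos
  have := r'.width_pos
  rw [width_node, width_node] at hw
  have s2 := (arc_node_right.1 (arc_top r (i + l.width))).1
  have s3 := (arc_node_left (r := r').1 (arc_top l' i)).1
  have s4 := (arc_node_right (l := l').1 (arc_top r' (i + l'.width))).1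
  -- The chord `[m, q]` of the first tree and `[p, m']` of the second one overlap.
  have e1 : i + l.width = a ∧ i + l.width + r.width = b := by
    by_contra e
    exact T'.nc _ _ _ _ s3 ((h3 _ _).2 (Or.inr ⟨s2, e⟩)) (by unfold Cr; omega)
  obtain ⟨rfl, rfl⟩ := e1
  have e2 : i = c ∧ i + l'.width = d := by
    rcases (h3 _ _).1 s3 with e | ⟨e, -⟩
    · exact e
    · exact absurd (by unfold Cr; omega) (T.nc _ _ _ _ e s2)
  obtain ⟨rfl, rfl⟩ := e2
  have s5 : (BTree.node l r).Arc i (i + l'.width) (i + l'.width + r'.width) := by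
    rcases (h3 _ _).1 s4 with e | e
    · omega
    · exact e.1
  cases r with
  | leaf => rw [width_leaf] at hw; omega
  | node Y Z =>
    have := Y.width_pos
    have := Z.width_pos
    rw [width_node] at hw h3
    have u1 := (arc_node_right (l := l)).1 (arc_node_left (r := Z).1 (arc_top Y (i + l.width))).1
      |>.1
    have u2 := (arc_node_right (l := l)).1
      (arc_node_right (l := Y).1 (arc_top Z (i + l.width + Y.width))).1 |>.1
    have u3 := (h3 _ _).2 (Or.inr ⟨u2, by omega⟩)
    have c1 := T.nc _ _ _ _ u1 s5
    have c2 := T'.nc _ _ _ _ u3 s3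
    unfold Cr at c1 c2
    have e : l'.width = l.width + Y.width := by omega
    have : BTree.node l' r' = .node (.node l Y) Z := by
      refine arc_injective _ _ i (by simp only [width_node]; omega) ?_
      refine T'.eq_of_le ?_ ?_
      · have := isTri_arc (.node (.node l Y) Z) i
        rw [width_node, width_node] at this
        rwa [width_node, show l'.width + r'.width = l.width + Y.width + Z.width by omega]
      · intro x y hxy
        rcases (h3 x y).1 hxy with ⟨rfl, rfl⟩ | ⟨hx, hn⟩
        · rw [e, ← width_node]
          exact Or.inr (Or.inl (arc_top _ _))
        · simp only [arc_node, width_node, ← add_assoc] at hx hn ⊢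
          rcases hx with h | h | h | h | h
          exacts [Or.inl h, Or.inr (Or.inl (Or.inr (Or.inl h))), absurd h hn,
            Or.inr (Or.inl (Or.inr (Or.inr h))), Or.inr (Or.inr h)]
    rw [this]
    exact .rotDown l Y Z

/-- Trees whose families differ by a flip differ by a rotation, possibly below the root. -/
lemma rot_of_swap (t t' : BTree) (i : ℕ) (hw : t.width = t'.width)
    (h : Swap (t.Arc i) (t'.Arc i)) : Rot t t' := by
  induction t generalizing t' i with
  | leaf =>
    cases t' with
    | leaf =>
      obtain ⟨a, b, c, d, h1, h2, h3⟩ := h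
      exact absurd ((h3 c d).2 (Or.inl ⟨rfl, rfl⟩)) h2
    | node l r =>
      have := l.width_pos; have := r.width_pos; rw [width_leaf, width_node] at hw; omega
  | node l r ihl ihr =>
    cases t' with
    | leaf => have := l.width_pos; have := r.width_pos; rw [width_leaf, width_node] at hw; omega
    | node l' r' =>
      rcases lt_trichotomy l.width l'.width with hlt | e | hlt
      · exact rot_of_swap_of_lt hw hlt h
      · have hwr : r.width = r'.width := by rw [width_node, width_node] at hw; omega
        have hl := l.width_pos
        have hr := r.width_pos
        have Tl := isTri_arc l i
        have Tl' := isTri_arc l' i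
        have Tr := isTri_arc r (i + l.width)
        have Tr' := isTri_arc r' (i + l'.width)
        obtain ⟨a, b, c, d, h1, h2, h3⟩ := h
        have hL : ∀ x y, l'.Arc i x y ↔ (x = c ∧ y = d ∧ d ≤ i + l.width) ∨
            (l.Arc i x y ∧ ¬ (x = a ∧ y = b)) := by
          intro x y
          rw [arc_node_left (l := l') (r := r'), arc_node_left (l := l) (r := r), h3, e]
          constructor
          · rintro ⟨⟨rfl, rfl⟩ | h, h'⟩
            exacts [Or.inl ⟨rfl, rfl, h'⟩, Or.inr ⟨⟨h.1, h'⟩, h.2⟩]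
          · rintro (⟨rfl, rfl, h'⟩ | h)
            exacts [⟨Or.inl ⟨rfl, rfl⟩, h'⟩, ⟨Or.inr ⟨h.1.1, h.2⟩, h.1.2⟩]
        have hR : ∀ x y, r'.Arc (i + l'.width) x y ↔ (x = c ∧ y = d ∧ i + l.width ≤ c) ∨
            (r.Arc (i + l.width) x y ∧ ¬ (x = a ∧ y = b)) := by
          intro x y
          rw [arc_node_right (l := l') (r := r'), arc_node_right (l := l) (r := r), h3, e]
          constructor
          · rintro ⟨⟨rfl, rfl⟩ | h, h'⟩
            exacts [Or.inl ⟨rfl, rfl, h'⟩, Or.inr ⟨⟨h.1, h'⟩, h.2⟩]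
          · rintro (⟨rfl, rfl, h'⟩ | h)
            exacts [⟨Or.inl ⟨rfl, rfl⟩, h'⟩, ⟨Or.inr ⟨h.1.1, h.2⟩, h.1.2⟩]
        rw [← hwr] at Tr'
        rw [← e] at Tl' Tr' hR
        -- The removed chord lies in one of the two subtrees; the other subtree cannot lose a chord,
        -- hence by maximality it cannot gain one either.
        rcases arc_node.1 h1 with h1 | h1 | h1
        · rcases (h3 _ _).1 (arc_top (.node l' r') i) with g | g
          · refine absurd ?_ h2
            rw [← g.1, ← g.2, ← hw]
            exact arc_top _ _
          · rw [width_node] at g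
            omega
        · have q := Tl.range _ _ h1
          have er := arc_injective r r' (i + l.width) hwr (Tr.eq_of_le Tr' fun x y hx => by
            have := Tr.range _ _ hx
            exact (hR x y).2 (Or.inr ⟨hx, by omega⟩))
          subst er
          refine .congLeft r (ihl l' i e ⟨a, b, c, d, h1, fun h => h2 (Or.inr (Or.inl h)), ?_⟩)
          have hd : d ≤ i + l.width := by
            by_contra hd
            have := Tl'.eq_of_le Tl fun x y hx => by
              rcases (hL x y).1 hx with g | g
              exacts [absurd g.2.2 hd, g.1]
            rcases (hL a b).1 ((this a b).2 h1) with g | g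
            exacts [hd g.2.2, g.2 ⟨rfl, rfl⟩]
          intro x y
          rw [hL]
          simp only [hd, and_true]
        · have q := Tr.range _ _ h1
          have el := arc_injective l l' i e (Tl.eq_of_le Tl' fun x y hx => by
            have := Tl.range _ _ hx
            exact (hL x y).2 (Or.inr ⟨hx, by omega⟩))
          subst el
          refine .congRight l (ihr r' (i + l.width) hwr
            ⟨a, b, c, d, h1, fun h => h2 (Or.inr (Or.inr h)), ?_⟩)
          have hd : i + l.width ≤ c := by
            by_contra hd
            have := Tr'.eq_of_le Tr fun x y hx => by
              rcases (hR x y).1 hx with g | g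
              exacts [absurd g.2.2 hd, g.1]
            rcases (hR a b).1 ((this a b).2 h1) with g | g
            exacts [hd g.2.2, g.2 ⟨rfl, rfl⟩]
          intro x y
          rw [hR]
          simp only [hd, and_true]
      · exact (rot_of_swap_of_lt hw.symm hlt h.symm).symm

/-! ### Chords as two-element sets -/

lemma pair_inj {a b c d : ℕ} (hab : a < b) (hcd : c < d) :
    ({a, b} : Finset ℕ) = {c, d} ↔ a = c ∧ b = d := by
  constructor
  · intro h
    have ha : a ∈ ({c, d} : Finset ℕ) := h ▸ by simp
    have hb : b ∈ ({c, d} : Finset ℕ) := h ▸ by simp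
    have hc : c ∈ ({a, b} : Finset ℕ) := h ▸ by simp
    simp only [Finset.mem_insert, Finset.mem_singleton] at ha hb hc
    omega
  · rintro ⟨rfl, rfl⟩; rfl

lemma crosses_pair {a b c d : ℕ} (hab : a < b) (hcd : c < d) :
    Crosses {a, b} {c, d} ↔ Cr a b c d := by
  constructor
  · rintro ⟨a', b', c', d', h1, h2, h3, h4, h5⟩
    rw [pair_inj hab h1] at h3
    rw [pair_inj hcd h2] at h4
    obtain ⟨rfl, rfl⟩ := h3
    obtain ⟨rfl, rfl⟩ := h4
    exact h5
  · exact fun h => ⟨a, b, c, d, hab, hcd, rfl, rfl, h⟩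

lemma isChord_iff {n : ℕ} {e : Finset ℕ} :
    IsChord n e ↔ ∃ a b, a < b ∧ b < n ∧ e = {a, b} := by
  constructor
  · rintro ⟨h1, h2⟩
    obtain ⟨x, y, hxy, rfl⟩ := Finset.card_eq_two.1 h1
    have hx := h2 x (by simp)
    have hy := h2 y (by simp)
    rcases lt_or_gt_of_ne hxy with h | h
    · exact ⟨x, y, h, hy, rfl⟩
    · exact ⟨y, x, h, hx, Finset.pair_comm x y⟩
  · rintro ⟨a, b, h1, h2, rfl⟩
    refine ⟨Finset.card_pair h1.ne, fun v hv => ?_⟩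
    simp only [Finset.mem_insert, Finset.mem_singleton] at hv
    omega

/-- The set of chords `{a, b}` given by a family of intervals `[a, b]`. -/
def chords (S : ℕ → ℕ → Prop) : Set (Finset ℕ) := {e | ∃ a b, a < b ∧ S a b ∧ e = {a, b}}

lemma pair_mem_chords {S : ℕ → ℕ → Prop} {a b : ℕ} (h : a < b) :
    ({a, b} : Finset ℕ) ∈ chords S ↔ S a b := by
  constructor
  · rintro ⟨c, d, h1, h2, h3⟩
    obtain ⟨rfl, rfl⟩ := (pair_inj h h1).1 h3
    exact h2
  · exact fun hs => ⟨a, b, h, hs, rfl⟩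

lemma IsTri.isTriangulation {n : ℕ} {S : ℕ → ℕ → Prop} (h : IsTri 0 (n + 1) S) :
    IsTriangulation (n + 2) (chords S) := by
  refine ⟨?_, ?_, ?_, ?_⟩
  · rintro _ ⟨a, b, hab, hs, rfl⟩
    have := h.range _ _ hs
    exact isChord_iff.2 ⟨a, b, hab, by omega, rfl⟩
  · rintro _ (⟨i, hi, rfl⟩ | ⟨-, rfl⟩)
    · exact ⟨i, i + 1, by omega, h.unit i (by omega) (by omega), rfl⟩
    · exact ⟨0, n + 1, by omega, h.top, rfl⟩
  · rintro _ ⟨a, b, hab, hs, rfl⟩ _ ⟨c, d, hcd, hs', rfl⟩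
    rw [crosses_pair hab hcd]
    exact h.nc _ _ _ _ hs hs'
  · intro e he hn
    obtain ⟨a, b, hab, hb, rfl⟩ := isChord_iff.1 he
    rw [pair_mem_chords hab] at hn
    obtain ⟨c, d, hs, hc⟩ := h.max a b (by omega) hab (by omega) hn
    have := h.range _ _ hs
    exact ⟨_, ⟨c, d, this.2.1, hs, rfl⟩, (crosses_pair hab this.2.1).2 hc⟩

lemma IsTriangulation.exists_isTri {n : ℕ} {T : Set (Finset ℕ)} (h : IsTriangulation (n + 2) T) :
    ∃ S, IsTri 0 (n + 1) S ∧ chords S = T := by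
  obtain ⟨h1, h2, h3, h4⟩ := h
  have hlt : ∀ a b, a < b → ({a, b} : Finset ℕ) ∈ T → b ≤ n + 1 := fun a b _ hT => by
    have := (h1 _ hT).2 b (by simp)
    omega
  refine ⟨fun a b => a < b ∧ ({a, b} : Finset ℕ) ∈ T, ⟨?_, ?_, ?_, ?_, ?_⟩, ?_⟩
  · exact fun a b h => ⟨Nat.zero_le _, h.1, hlt a b h.1 h.2⟩
  · exact fun a _ ha => ⟨by omega, h2 _ (Or.inl ⟨a, by omega, rfl⟩)⟩
  · exact ⟨by omega, h2 _ (Or.inr ⟨by omega, rfl⟩)⟩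
  · exact fun a b c d h h' hc => h3 _ h.2 _ h'.2 ((crosses_pair h.1 h'.1).2 hc)
  · intro a b _ hab hb hn
    obtain ⟨f, hf, hc⟩ := h4 {a, b} (isChord_iff.2 ⟨a, b, hab, by omega, rfl⟩)
      fun h => hn ⟨hab, h⟩
    obtain ⟨c, d, hcd, -, rfl⟩ := isChord_iff.1 (h1 f hf)
    exact ⟨c, d, ⟨hcd, hf⟩, (crosses_pair hab hcd).1 hc⟩
  · ext e
    constructor
    · rintro ⟨a, b, -, h, rfl⟩
      exact h.2
    · intro he
      obtain ⟨a, b, hab, -, rfl⟩ := isChord_iff.1 (h1 e he)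
      exact ⟨a, b, hab, ⟨hab, he⟩, rfl⟩

lemma flip_chords_iff {n : ℕ} {S S' : ℕ → ℕ → Prop} (h : IsTri 0 (n + 1) S)
    (h' : IsTri 0 (n + 1) S') : Flip (n + 2) (chords S) (chords S') ↔ Swap S S' := by
  constructor
  · rintro ⟨-, hT', e, f, he, hf, hE⟩
    obtain ⟨a, b, hab, hs, rfl⟩ := he
    obtain ⟨c, d, hcd, -, rfl⟩ := isChord_iff.1 (hT'.1 f (hE ▸ Set.mem_insert _ _))
    rw [pair_mem_chords hcd] at hf
    refine ⟨a, b, c, d, hs, hf, fun x y => ?_⟩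
    by_cases hxy : x < y
    · rw [← pair_mem_chords (S := S') hxy, hE, Set.mem_insert_iff, Set.mem_sdiff,
        pair_mem_chords hxy, Set.mem_singleton_iff, pair_inj hxy hcd, pair_inj hxy hab]
    · have h1 := h.range x y
      have h2 := h'.range x y
      constructor
      · intro g; have := h2 g; omega
      · rintro (g | g)
        · omega
        · have := h1 g.1; omega
  · rintro ⟨a, b, c, d, h1, h2, h3⟩
    have hab := (h.range _ _ h1).2.1
    have hcd := (h'.range _ _ ((h3 c d).2 (Or.inl ⟨rfl, rfl⟩))).2.1
    refine ⟨h.isTriangulation, h'.isTriangulation, {a, b}, {c, d}, (pair_mem_chords hab).2 h1,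
      fun g => h2 ((pair_mem_chords hcd).1 g), ?_⟩
    ext e
    rw [Set.mem_insert_iff, Set.mem_sdiff, Set.mem_singleton_iff]
    constructor
    · rintro ⟨x, y, hxy, hs, rfl⟩
      rw [pair_mem_chords hxy, pair_inj hxy hcd, pair_inj hxy hab]
      exact (h3 x y).1 hs
    · rintro (rfl | ⟨⟨x, y, hxy, hs, rfl⟩, hn⟩)
      · exact ⟨c, d, hcd, (h3 c d).2 (Or.inl ⟨rfl, rfl⟩), rfl⟩
      · rw [pair_inj hxy hab] at hn
        exact ⟨x, y, hxy, (h3 x y).2 (Or.inr ⟨hs, hn⟩), rfl⟩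

lemma isTri_of_internal {n : ℕ} {t : BTree} (h : t.internal = n) :
    IsTri 0 (n + 1) (t.Arc 0) := by
  have := isTri_arc t 0
  rwa [width, h, Nat.zero_add] at this

/-- For every `n ≥ 1`, the rotation graph of binary trees with
`n` internal nodes is isomorphic, as a graph, to the flip graph of triangulations
of a convex `(n+2)`-gon. -/
theorem rotation_graph_iso_flip_graph (n : ℕ) (hn : 1 ≤ n) :
    ∃ φ : {t : BTree // t.internal = n} ≃
        {T : Set (Finset ℕ) // IsTriangulation (n + 2) T},
      ∀ t₁ t₂ : {t : BTree // t.internal = n},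
        Rot t₁.val t₂.val ↔ Flip (n + 2) (φ t₁).val (φ t₂).val := by
  have hwidth : ∀ t₁ t₂ : {t : BTree // t.internal = n}, t₁.val.width = t₂.val.width :=
    fun t₁ t₂ => by rw [width, width, t₁.2, t₂.2]
  let F : {t : BTree // t.internal = n} → {T : Set (Finset ℕ) // IsTriangulation (n + 2) T} :=
    fun t => ⟨chords (t.val.Arc 0), (isTri_of_internal t.2).isTriangulation⟩
  have hF : Function.Bijective F := by
    constructor
    · intro t₁ t₂ h
      have h : chords (t₁.val.Arc 0) = chords (t₂.val.Arc 0) := congrArg Subtype.val h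
      refine Subtype.ext (arc_injective _ _ 0 (hwidth t₁ t₂) fun a b => ?_)
      by_cases hab : a < b
      · rw [← pair_mem_chords (S := t₁.val.Arc 0) hab, h, pair_mem_chords hab]
      · exact ⟨fun g => absurd (arc_range _ _ _ _ g).2.1 hab,
          fun g => absurd (arc_range _ _ _ _ g).2.1 hab⟩
    · rintro ⟨T, hT⟩
      obtain ⟨S, hS, rfl⟩ := hT.exists_isTri
      obtain ⟨t, ht, hA⟩ := IsTri.exists_tree n 0 S (by rwa [Nat.zero_add])
      refine ⟨⟨t, ht⟩, Subtype.ext ?_⟩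
      have : t.Arc 0 = S := funext₂ fun a b => propext (hA a b)
      change chords (t.Arc 0) = chords S
      rw [this]
  refine ⟨Equiv.ofBijective F hF, fun t₁ t₂ => ?_⟩
  change _ ↔ Flip (n + 2) (chords (t₁.val.Arc 0)) (chords (t₂.val.Arc 0))
  rw [flip_chords_iff (isTri_of_internal t₁.2) (isTri_of_internal t₂.2)]
  exact ⟨fun h => h.swap 0, rot_of_swap _ _ 0 (hwidth t₁ t₂)⟩
end
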